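/- If G is a triangle-free graph of order n with minimum degree at least 4, then ι(G) ≤ 3n/10. -/

import Mathlib

open Classical

/-- The closed neighborhood `N[D]` of a set `D` of vertices. -/
def closedNbhd {V : Type*} (G : SimpleGraph V) (D : Set V) : Set V :=
  {v | v ∈ D ∨ ∃ u ∈ D, G.Adj u v}

/-- `S` is an isolating set of `G`: deleting `N[S]` leaves no edge. -/
def IsIsolatingSet {V : Type*} (G : SimpleGraph V) (S : Set V) : Prop :=
  ∀ u v : V, G.Adj u v → u ∈ closedNbhd G S ∨ v ∈ closedNbhd G S

/-- The isolation number: the minimum cardinality of an isolating set. -/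
noncomputable def isolationNumber {V : Type*} [Fintype V] (G : SimpleGraph V) : ℕ :=
  sInf {k | ∃ S : Set V, IsIsolatingSet G S ∧ S.ncard = k}

namespace Iso

set_option linter.unusedSectionVars false

variable {V : Type*} [Fintype V]

/-- number of neighbours in `W` -/
noncomputable def d (G : SimpleGraph V) (W : Finset V) (v : V) : ℕ :=
  (W.filter (fun w => G.Adj v w)).card

/-- weight of a vertex outside `W` with `k` neighbours in `W` -/
def b (k : ℕ) : ℕ := if k = 0 then 0 else if k = 1 then 8 else min (3 * k + 6) 21

/-- potential -/
noncomputable def Phi (G : SimpleGraph V) (W : Finset V) : ℕ :=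
  36 * W.card + ∑ v ∈ Wᶜ, b (d G W v)

/-- covered by `T` -/
def Cov (G : SimpleGraph V) (T : Finset V) (u : V) : Prop := u ∈ T ∨ ∃ t ∈ T, G.Adj t u

/-- `W` can be isolated within budget -/
def Good (G : SimpleGraph V) (W : Finset V) : Prop :=
  ∃ S : Finset V, (∀ u ∈ W, ∀ w ∈ W, G.Adj u w → Cov G S u ∨ Cov G S w) ∧
    120 * S.card ≤ Phi G W

lemma b_slope {k m s : ℕ} (h : s = 0 ∨ (s = 3 ∧ k + m ≤ 5)) : b k + s * m ≤ b (k + m) := by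
  unfold b
  rcases h with h | ⟨h, h'⟩
  · subst h; split_ifs <;> omega
  · subst h; split_ifs <;> omega

lemma b_mono {k m : ℕ} (h : k ≤ m) : b k ≤ b m := by
  obtain ⟨r, rfl⟩ := Nat.exists_eq_add_of_le h
  have := b_slope (k := k) (m := r) (s := 0) (Or.inl rfl)
  omega

lemma d_split (G : SimpleGraph V) {W R : Finset V} (hR : R ⊆ W) (v : V) :
    d G W v = d G (W \ R) v + d G R v := by
  unfold d
  rw [← Finset.card_union_of_disjoint, ← Finset.filter_union, Finset.sdiff_union_of_subset hR]
  exact Finset.disjoint_filter_filter Finset.sdiff_disjoint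

lemma drop (G : SimpleGraph V) (hmin : ∀ v, 4 ≤ d G Finset.univ v)
    {W R : Finset V} (hR : R ⊆ W) (s : ℕ)
    (hs : ∀ v ∉ W, b (d G (W \ R) v) + s * d G R v ≤ b (d G W v)) (g : V → ℕ)
    (hg : ∀ u ∈ R, g u + b (d G (W \ R) u) ≤ 36 + s * (4 - d G W u)) :
    Phi G (W \ R) + ∑ u ∈ R, g u ≤ Phi G W := by
  have h1 : (W \ R)ᶜ = Wᶜ ∪ R := by
    ext x; simp only [Finset.mem_compl, Finset.mem_sdiff, Finset.mem_union]; tauto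
  have hdis : Disjoint Wᶜ R := by
    rw [Finset.disjoint_left]; intro x hx hx'; exact (Finset.mem_compl.1 hx) (hR hx')
  have h2 : (W \ R).card + R.card = W.card := Finset.card_sdiff_add_card_eq_card hR
  have h3 := Finset.sum_le_sum hg
  have h4 : ∑ v ∈ Wᶜ, (b (d G (W \ R) v) + s * d G R v) ≤ ∑ v ∈ Wᶜ, b (d G W v) :=
    Finset.sum_le_sum (fun v hv => hs v (Finset.mem_compl.1 hv))
  have h5 : ∑ v ∈ Wᶜ, d G R v = ∑ u ∈ R, d G Wᶜ u := by
    have := Finset.sum_card_bipartiteAbove_eq_sum_card_bipartiteBelow (s := Wᶜ) (t := R)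
      (fun a c => G.Adj a c)
    unfold Finset.bipartiteAbove Finset.bipartiteBelow at this
    unfold d
    rw [this]
    refine Finset.sum_congr rfl (fun u _ => ?_)
    congr 1
    ext x; simp [G.adj_comm]
  have h6 : ∑ u ∈ R, (4 - d G W u) ≤ ∑ u ∈ R, d G Wᶜ u := by
    refine Finset.sum_le_sum (fun u _ => ?_)
    have := d_split G (Finset.subset_univ W) u
    rw [← Finset.compl_eq_univ_sdiff] at this
    have := hmin u
    omega
  have h7 := Nat.mul_le_mul_left s h6
  simp only [Finset.sum_add_distrib, ← Finset.mul_sum, Finset.sum_const, smul_eq_mul] at h3 h4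
  unfold Phi
  rw [h1, Finset.sum_union hdis]
  rw [h5] at h4
  omega

lemma dropConst (G : SimpleGraph V) (hmin : ∀ v, 4 ≤ d G Finset.univ v)
    {W R : Finset V} (hR : R ⊆ W) (s c : ℕ)
    (hs : ∀ v ∉ W, b (d G (W \ R) v) + s * d G R v ≤ b (d G W v))
    (hg : ∀ u ∈ R, c + b (d G (W \ R) u) ≤ 36 + s * (4 - d G W u)) :
    Phi G (W \ R) + R.card * c ≤ Phi G W := by
  have := drop G hmin hR s hs (fun _ => c) hg
  simpa using this

lemma dropInsert (G : SimpleGraph V) (hmin : ∀ v, 4 ≤ d G Finset.univ v)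
    {W R : Finset V} {z : V} (hz : z ∈ W) (hzR : z ∉ R) (hR : R ⊆ W) (s c0 c : ℕ)
    (hs : ∀ v ∉ W, b (d G (W \ insert z R) v) + s * d G (insert z R) v ≤ b (d G W v))
    (hg0 : c0 + b (d G (W \ insert z R) z) ≤ 36 + s * (4 - d G W z))
    (hg : ∀ u ∈ R, c + b (d G (W \ insert z R) u) ≤ 36 + s * (4 - d G W u)) :
    Phi G (W \ insert z R) + (c0 + R.card * c) ≤ Phi G W := by
  have := drop G hmin (Finset.insert_subset hz hR) s hs (fun u => if u = z then c0 else c) (by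
    intro u hu
    rcases Finset.mem_insert.1 hu with rfl | hu
    · simpa using hg0
    · have : u ≠ z := fun h => hzR (h ▸ hu)
      simpa [this] using hg u hu)
  rw [Finset.sum_insert hzR] at this
  have h2 : ∑ u ∈ R, (if u = z then c0 else c) = R.card * c := by
    rw [Finset.sum_congr rfl (g := fun _ => c)]
    · simp
    · intro u hu
      have : u ≠ z := fun h => hzR (h ▸ hu)
      simp [this]
  rw [h2] at this
  simpa using this

lemma slope0 (G : SimpleGraph V) {W R : Finset V} (hR : R ⊆ W) :
    ∀ v ∉ W, b (d G (W \ R) v) + 0 * d G R v ≤ b (d G W v) := by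
  intro v _
  rw [d_split G hR v]
  exact b_slope (Or.inl rfl)

lemma slope3 (G : SimpleGraph V) {W R : Finset V} (hR : R ⊆ W) (hK : ∀ v ∉ W, d G W v ≤ 5) :
    ∀ v ∉ W, b (d G (W \ R) v) + 3 * d G R v ≤ b (d G W v) := by
  intro v hv
  have := hK v hv
  rw [d_split G hR v] at this ⊢
  exact b_slope (Or.inr ⟨rfl, this⟩)

lemma d_zero (G : SimpleGraph V) {W : Finset V} {u : V} : d G W u = 0 ↔ ∀ w ∈ W, ¬ G.Adj u w := by
  unfold d
  rw [Finset.card_eq_zero, Finset.filter_eq_empty_iff]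

lemma d_sdiff_zero (G : SimpleGraph V) {W R : Finset V} {u : V}
    (h : ∀ w ∈ W, G.Adj u w → w ∈ R) : d G (W \ R) u = 0 := by
  rw [d_zero]
  intro w hw ha
  rw [Finset.mem_sdiff] at hw
  exact hw.2 (h w hw.1 ha)

lemma d_pos (G : SimpleGraph V) {R : Finset V} {u w : V} (hw : w ∈ R) (ha : G.Adj u w) :
    1 ≤ d G R u := Finset.card_pos.2 ⟨w, Finset.mem_filter.2 ⟨hw, ha⟩⟩

lemma d_sdiff_lt (G : SimpleGraph V) {W R : Finset V} (hR : R ⊆ W) {u w : V}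
    (hw : w ∈ R) (ha : G.Adj u w) : d G (W \ R) u + 1 ≤ d G W u := by
  rw [d_split G hR u]
  have := d_pos G hw ha
  omega

lemma d_mono (G : SimpleGraph V) {W R : Finset V} (hR : R ⊆ W) (u : V) : d G R u ≤ d G W u :=
  Finset.card_le_card (Finset.filter_subset_filter _ hR)

lemma d_one (G : SimpleGraph V) {W : Finset V} {u : V} (h : d G W u = 1) :
    ∃ a ∈ W, G.Adj u a ∧ ∀ w ∈ W, G.Adj u w → w = a := by
  obtain ⟨a, ha⟩ := Finset.card_eq_one.1 h
  have h' : ∀ w, (w ∈ W ∧ G.Adj u w) ↔ w = a := by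
    intro w; rw [← Finset.mem_filter, ha, Finset.mem_singleton]
  exact ⟨a, ((h' a).2 rfl).1, ((h' a).2 rfl).2, fun w h1 h2 => (h' w).1 ⟨h1, h2⟩⟩

lemma d_two (G : SimpleGraph V) {W : Finset V} {u a : V} (h : d G W u = 2) (ha : a ∈ W)
    (hua : G.Adj u a) :
    ∃ c ∈ W, G.Adj u c ∧ a ≠ c ∧ ∀ w ∈ W, G.Adj u w → w = a ∨ w = c := by
  obtain ⟨x, y, hxy, hs⟩ := Finset.card_eq_two.1 h
  have h' : ∀ w, (w ∈ W ∧ G.Adj u w) ↔ (w = x ∨ w = y) := by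
    intro w; rw [← Finset.mem_filter, hs]; simp
  rcases (h' a).1 ⟨ha, hua⟩ with rfl | rfl
  · exact ⟨y, ((h' y).2 (Or.inr rfl)).1, ((h' y).2 (Or.inr rfl)).2, hxy,
      fun w h1 h2 => (h' w).1 ⟨h1, h2⟩⟩
  · exact ⟨x, ((h' x).2 (Or.inl rfl)).1, ((h' x).2 (Or.inl rfl)).2, hxy.symm,
      fun w h1 h2 => ((h' w).1 ⟨h1, h2⟩).symm⟩

lemma step (G : SimpleGraph V) {W W' : Finset V} (T : Finset V) (hW : Good G W')
    (hc : ∀ u ∈ W, ∀ w ∈ W, G.Adj u w → Cov G T u ∨ Cov G T w ∨ (u ∈ W' ∧ w ∈ W'))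
    (hP : Phi G W' + 120 * T.card ≤ Phi G W) : Good G W := by
  obtain ⟨S, hS, hS2⟩ := hW
  refine ⟨S ∪ T, ?_, ?_⟩
  · intro u hu w hw ha
    have hl : ∀ x, Cov G S x → Cov G (S ∪ T) x := by
      rintro x (h | ⟨t, h, h'⟩)
      · exact Or.inl (Finset.mem_union_left _ h)
      · exact Or.inr ⟨t, Finset.mem_union_left _ h, h'⟩
    have hr : ∀ x, Cov G T x → Cov G (S ∪ T) x := by
      rintro x (h | ⟨t, h, h'⟩)
      · exact Or.inl (Finset.mem_union_right _ h)
      · exact Or.inr ⟨t, Finset.mem_union_right _ h, h'⟩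
    rcases hc u hu w hw ha with h | h | ⟨h1, h2⟩
    · exact Or.inl (hr _ h)
    · exact Or.inr (hr _ h)
    · rcases hS u h1 w h2 ha with h | h
      · exact Or.inl (hl _ h)
      · exact Or.inr (hl _ h)
  · have := Finset.card_union_le S T
    omega

/-- star coverage -/
lemma star_cov (G : SimpleGraph V) {W R : Finset V} {v : V}
    (hR : ∀ u ∈ W, u ∈ R → (u = v ∨ G.Adj v u ∨ ∀ w ∈ W, G.Adj u w → G.Adj v w)) :
    ∀ u ∈ W, ∀ w ∈ W, G.Adj u w → Cov G {v} u ∨ Cov G {v} w ∨ (u ∈ W \ R ∧ w ∈ W \ R) := by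
  intro u hu w hw ha
  have hh := hR u hu
  have hh' := hR w hw
  simp only [Cov, Finset.mem_singleton, exists_eq_left, Finset.mem_sdiff]
  by_cases h1 : u ∈ R
  · rcases hh h1 with h | h | h
    · exact Or.inl (Or.inl h)
    · exact Or.inl (Or.inr h)
    · exact Or.inr (Or.inl (Or.inr (h w hw ha)))
  · by_cases h2 : w ∈ R
    · rcases hh' h2 with h | h | h
      · exact Or.inr (Or.inl (Or.inl h))
      · exact Or.inr (Or.inl (Or.inr h))
      · exact Or.inl (Or.inr (h u hu ha.symm))
    · exact Or.inr (Or.inr ⟨⟨hu, h1⟩, ⟨hw, h2⟩⟩)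

lemma sdiff_ssub {W R : Finset V} {x : V} (hx : x ∈ W) (hxR : x ∈ R) : W \ R ⊂ W := by
  refine Finset.ssubset_iff_subset_ne.2 ⟨Finset.sdiff_subset, fun h => ?_⟩
  rw [← h] at hx
  exact (Finset.mem_sdiff.1 hx).2 hxR

/-- white star: delete `v` and its neighbours -/
lemma white_star (G : SimpleGraph V) (hmin : ∀ v, 4 ≤ d G Finset.univ v)
    {W : Finset V} {v : V} (hv : v ∈ W) (s c0 c : ℕ)
    (hs : ∀ R ⊆ W, ∀ v ∉ W, b (d G (W \ R) v) + s * d G R v ≤ b (d G W v))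
    (hg0 : c0 ≤ 36 + s * (4 - d G W v))
    (hg : ∀ u ∈ W, G.Adj v u → ∀ k, k + 1 ≤ d G W u → c + b k ≤ 36 + s * (4 - d G W u)) :
    Phi G (W \ insert v (W.filter (fun w => G.Adj v w))) + (c0 + d G W v * c) ≤ Phi G W := by
  have hsub : W.filter (fun w => G.Adj v w) ⊆ W := Finset.filter_subset _ _
  have hsub' := Finset.insert_subset hv hsub
  refine dropInsert G hmin hv (by simp) hsub s c0 c (hs _ hsub') ?_ ?_
  · rw [d_sdiff_zero]
    · simpa [b] using hg0
    · intro w hw ha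
      simp [hw, ha]
  · intro u hu
    rw [Finset.mem_filter] at hu
    exact hg u hu.1 hu.2 _ (d_sdiff_lt G hsub' (Finset.mem_insert_self _ _) hu.2.symm)

lemma white_star_cov (G : SimpleGraph V) {W : Finset V} {v : V} :
    ∀ u ∈ W, ∀ w ∈ W, G.Adj u w → Cov G {v} u ∨ Cov G {v} w ∨
      (u ∈ W \ insert v (W.filter (fun w => G.Adj v w)) ∧
        w ∈ W \ insert v (W.filter (fun w => G.Adj v w))) := by
  refine star_cov G (fun u _ h => ?_)
  rcases Finset.mem_insert.1 h with h | h
  · exact Or.inl h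
  · exact Or.inr (Or.inl (Finset.mem_filter.1 h).2)

/-- end of a path -/
lemma caseP (G : SimpleGraph V) (hmin : ∀ v, 4 ≤ d G Finset.univ v)
    {W : Finset V} (hD : ∀ v ∈ W, d G W v ≤ 2) (hK : ∀ v ∉ W, d G W v ≤ 5)
    {x1 x2 : V} (h1 : x1 ∈ W) (h2 : x2 ∈ W) (h12 : G.Adj x1 x2) (d1 : d G W x1 = 1)
    (d2 : d G W x2 = 2) :
    ∃ t, ∃ W' ⊂ W, (∀ u ∈ W, ∀ w ∈ W, G.Adj u w →
      Cov G {t} u ∨ Cov G {t} w ∨ (u ∈ W' ∧ w ∈ W')) ∧ Phi G W' + 130 ≤ Phi G W := by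
  obtain ⟨x3, h3, h23, n13, N2⟩ := d_two G d2 h1 h12.symm
  obtain ⟨a, ha, ha1, N1⟩ := d_one G d1
  obtain rfl := N1 x2 h2 h12
  by_cases d3 : d G W x3 = 1
  · refine ⟨x2, _, sdiff_ssub h2 (Finset.mem_insert_self _ _), white_star_cov G, ?_⟩
    have := white_star G hmin h2 3 42 45 (fun R hR => slope3 G hR hK) (by rw [d2]) (by
      intro u hu hau k hk
      have : d G W u = 1 := by rcases N2 u hu hau with rfl | rfl <;> assumption
      rw [this] at hk ⊢
      obtain rfl : k = 0 := by omega
      simp [b])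
    rw [d2] at this
    omega
  · have d3' : d G W x3 = 2 := by
      have := hD x3 h3
      have := d_pos G h2 h23.symm
      omega
    obtain ⟨x4, h4, h34, n24, N3⟩ := d_two G d3' h2 h23.symm
    have n12 := h12.ne
    have n23 := h23.ne
    have n34 := h34.ne
    have n14 : x1 ≠ x4 := by
      rintro rfl
      exact n23 (N1 x3 h3 h34.symm).symm
    have hsub : ({x1, x2, x3, x4} : Finset V) ⊆ W := by
      intro x hx; simp only [Finset.mem_insert, Finset.mem_singleton] at hx
      rcases hx with rfl | rfl | rfl | rfl <;> assumption
    refine ⟨x3, W \ {x1, x2, x3, x4}, sdiff_ssub h1 (by simp), star_cov G ?_, ?_⟩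
    · intro u hu hx
      simp only [Finset.mem_insert, Finset.mem_singleton] at hx
      rcases hx with rfl | rfl | rfl | rfl
      · refine Or.inr (Or.inr ?_)
        intro w hw haw
        rw [N1 w hw haw]; exact h23.symm
      · exact Or.inr (Or.inl h23.symm)
      · exact Or.inl rfl
      · exact Or.inr (Or.inl h34)
    · have := dropConst G hmin hsub 3 34 (slope3 G hsub hK) (by
        intro u hu
        have hk : d G (W \ {x1, x2, x3, x4}) u ≤ 1 := by
          simp only [Finset.mem_insert, Finset.mem_singleton] at hu
          rcases hu with rfl | rfl | rfl | rfl
          · have := d_mono G (Finset.sdiff_subset (s := W) (t := {u, x2, x3, x4})) u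
            omega
          · have := d_sdiff_lt G hsub (by simp) h12.symm
            omega
          · have := d_sdiff_lt G hsub (by simp) h23.symm
            omega
          · have := d_sdiff_lt G hsub (by simp) h34.symm
            have := hD u h4
            omega
        have h8 := b_mono hk
        have h9 : b 1 = 8 := rfl
        have := hD u (hsub hu)
        omega)
      have hcard : ({x1, x2, x3, x4} : Finset V).card = 4 := by
        simp [*]
      rw [hcard] at this
      omega

/-- a five-cycle component with a vertex `y` joining it to the rest -/
lemma caseC5y (G : SimpleGraph V) (hmin : ∀ v, 4 ≤ d G Finset.univ v)
    {W : Finset V} (ih : ∀ W' ⊂ W, Good G W')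
    (hD : ∀ v ∈ W, d G W v ≤ 2) (hK : ∀ v ∉ W, d G W v ≤ 5) (hpos : ∀ v ∈ W, 1 ≤ d G W v)
    {x0 x1 x2 x3 x4 y z : V} {R : Finset V} (hRe : R = {x0, x1, x2, x3, x4}) (hR : R ⊆ W)
    (hcard : R.card = 5)
    (hcl : ∀ u ∈ R, ∀ w ∈ W, G.Adj u w → w ∈ R)
    (N4 : ∀ w ∈ W, G.Adj x4 w → w = x3 ∨ w = x0)
    (h21 : G.Adj x2 x1) (h23 : G.Adj x2 x3)
    (hy : G.Adj y x0) (hz : z ∈ W) (hzR : z ∉ R) (hyz : G.Adj y z) : Good G W := by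
  have hsub := Finset.insert_subset hz hR
  refine step G (W' := W \ insert z R) {y, x2} (ih _ (sdiff_ssub hz (by simp))) ?_ ?_
  · have key : ∀ u ∈ W, u ∈ insert z R → Cov G {y, x2} u ∨
        ∀ w ∈ W, G.Adj u w → Cov G {y, x2} w := by
      intro u hu hx
      subst hRe
      simp only [Finset.mem_insert, Finset.mem_singleton] at hx
      simp only [Cov, Finset.mem_insert, Finset.mem_singleton, exists_eq_or_imp, exists_eq_left]
      rcases hx with rfl | rfl | rfl | rfl | rfl | rfl
      · simp [hyz]
      · simp [hy]
      · simp [h21]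
      · simp
      · simp [h23]
      · right
        intro w hw ha
        rcases N4 w hw ha with rfl | rfl
        · simp [h23]
        · simp [hy]
    intro u hu w hw ha
    by_cases h1 : u ∈ insert z R
    · rcases key u hu h1 with h | h
      · exact Or.inl h
      · exact Or.inr (Or.inl (h w hw ha))
    · by_cases h2 : w ∈ insert z R
      · rcases key w hw h2 with h | h
        · exact Or.inr (Or.inl h)
        · exact Or.inl (h u hu ha.symm)
      · exact Or.inr (Or.inr ⟨Finset.mem_sdiff.2 ⟨hu, h1⟩, Finset.mem_sdiff.2 ⟨hw, h2⟩⟩)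
  · have := dropInsert G hmin hz hzR hR 3 30 42 (slope3 G hsub hK) (by
      have h1 := d_mono G (Finset.sdiff_subset (s := W) (t := insert z R)) z
      have h8 := b_mono h1
      have h2 := hD z hz
      have h3 := hpos z hz
      have h4 : d G W z = 1 ∨ d G W z = 2 := by omega
      rcases h4 with h | h <;> rw [h] at h8 ⊢
      · have h9 : b 1 = 8 := rfl
        omega
      · have h9 : b 2 = 12 := rfl
        omega) (by
      intro u hu
      rw [d_sdiff_zero G (fun w hw ha => Finset.mem_insert_of_mem (hcl u hu w hw ha))]
      have h9 : b 0 = 0 := rfl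
      have := hD u (hR hu)
      omega)
    have := Finset.card_le_two (a := y) (b := x2)
    omega

lemma five {α : Type*} (P : α → Prop) {x0 x1 x2 x3 x4 : α} (a0 : P x0 → ¬ P x1)
    (a1 : P x1 → ¬ P x2) (a2 : P x2 → ¬ P x3) (a3 : P x3 → ¬ P x4) (a4 : P x4 → ¬ P x0) :
    ∃ p q : α, ∀ x, (x = x0 ∨ x = x1 ∨ x = x2 ∨ x = x3 ∨ x = x4) → P x → x = p ∨ x = q := by
  by_cases q0 : P x0
  · by_cases q2 : P x2
    · exact ⟨x0, x2, by grind⟩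
    · exact ⟨x0, x3, by grind⟩
  · by_cases q1 : P x1
    · by_cases q3 : P x3
      · exact ⟨x1, x3, by grind⟩
      · exact ⟨x1, x4, by grind⟩
    · by_cases q2 : P x2
      · exact ⟨x2, x4, by grind⟩
      · exact ⟨x3, x4, by grind⟩

/-- a five-cycle component -/
lemma caseC5 (G : SimpleGraph V) (hmin : ∀ v, 4 ≤ d G Finset.univ v)
    (htf : ∀ a c e, G.Adj a c → G.Adj c e → G.Adj a e → False)
    {W : Finset V} (ih : ∀ W' ⊂ W, Good G W')
    (hD : ∀ v ∈ W, d G W v ≤ 2) (hK : ∀ v ∉ W, d G W v ≤ 5) (hpos : ∀ v ∈ W, 1 ≤ d G W v)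
    {x0 x1 x2 x3 x4 : V} {R : Finset V} (hRe : R = {x0, x1, x2, x3, x4}) (hR : R ⊆ W)
    (hcard : R.card = 5)
    (N0 : ∀ w ∈ W, G.Adj x0 w → w = x4 ∨ w = x1)
    (N1 : ∀ w ∈ W, G.Adj x1 w → w = x0 ∨ w = x2)
    (N2 : ∀ w ∈ W, G.Adj x2 w → w = x1 ∨ w = x3)
    (N3 : ∀ w ∈ W, G.Adj x3 w → w = x2 ∨ w = x4)
    (N4 : ∀ w ∈ W, G.Adj x4 w → w = x3 ∨ w = x0)
    (h01 : G.Adj x0 x1) (h12 : G.Adj x1 x2) (h23 : G.Adj x2 x3) (h34 : G.Adj x3 x4)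
    (h40 : G.Adj x4 x0) : Good G W := by
  have hcl : ∀ u ∈ R, ∀ w ∈ W, G.Adj u w → w ∈ R := by
    subst hRe
    intro u hu w hw ha
    simp only [Finset.mem_insert, Finset.mem_singleton] at hu ⊢
    rcases hu with rfl | rfl | rfl | rfl | rfl
    · rcases N0 w hw ha with h | h <;> simp [h]
    · rcases N1 w hw ha with h | h <;> simp [h]
    · rcases N2 w hw ha with h | h <;> simp [h]
    · rcases N3 w hw ha with h | h <;> simp [h]
    · rcases N4 w hw ha with h | h <;> simp [h]
  by_cases hy : ∃ y, ∃ x ∈ R, ∃ z ∈ W, z ∉ R ∧ G.Adj y x ∧ G.Adj y z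
  · obtain ⟨y, x, hx, z, hz, hzR, hyx, hyz⟩ := hy
    have hx' := hx
    rw [hRe] at hx'
    simp only [Finset.mem_insert, Finset.mem_singleton] at hx'
    rcases hx' with rfl | rfl | rfl | rfl | rfl
    · exact caseC5y G hmin ih hD hK hpos hRe hR hcard hcl N4 h12.symm h23 hyx hz hzR hyz
    · exact caseC5y G hmin ih hD hK hpos (x0 := x) (x1 := x2) (x2 := x3) (x3 := x4) (x4 := x0)
        (by rw [hRe]; ext; simp; tauto) hR hcard hcl N0 h23.symm h34 hyx hz hzR hyz
    · exact caseC5y G hmin ih hD hK hpos (x0 := x) (x1 := x3) (x2 := x4) (x3 := x0) (x4 := x1)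
        (by rw [hRe]; ext; simp; tauto) hR hcard hcl N1 h34.symm h40 hyx hz hzR hyz
    · exact caseC5y G hmin ih hD hK hpos (x0 := x) (x1 := x4) (x2 := x0) (x3 := x1) (x4 := x2)
        (by rw [hRe]; ext; simp; tauto) hR hcard hcl N2 h40.symm h01 hyx hz hzR hyz
    · exact caseC5y G hmin ih hD hK hpos (x0 := x) (x1 := x0) (x2 := x1) (x3 := x2) (x4 := x3)
        (by rw [hRe]; ext; simp; tauto) hR hcard hcl N3 h01.symm h12 hyx hz hzR hyz
  · push Not at hy
    have hx0 : x0 ∈ R := by simp [hRe]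
    refine step G (W' := W \ R) {x0, x2} (ih _ (sdiff_ssub (hR hx0) hx0)) ?_ ?_
    · have key : ∀ u ∈ R, Cov G {x0, x2} u := by
        intro u hx
        subst hRe
        simp only [Finset.mem_insert, Finset.mem_singleton] at hx
        simp only [Cov, Finset.mem_insert, Finset.mem_singleton, exists_eq_or_imp, exists_eq_left]
        rcases hx with rfl | rfl | rfl | rfl | rfl <;> simp [h01, h23, h40.symm]
      intro u hu w hw ha
      by_cases h1 : u ∈ R
      · exact Or.inl (key u h1)
      · by_cases h2 : w ∈ R
        · exact Or.inr (Or.inl (key w h2))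
        · exact Or.inr (Or.inr ⟨Finset.mem_sdiff.2 ⟨hu, h1⟩, Finset.mem_sdiff.2 ⟨hw, h2⟩⟩)
    · have hs : ∀ v ∉ W, b (d G (W \ R) v) + 6 * d G R v ≤ b (d G W v) := by
        intro v hv
        by_cases h0 : d G R v = 0
        · rw [h0, mul_zero, add_zero]
          exact b_mono (d_mono G Finset.sdiff_subset v)
        · have hex : ∃ x ∈ R, G.Adj v x := by
            by_contra hcon
            push Not at hcon
            exact h0 ((d_zero G).2 hcon)
          obtain ⟨x, hx, hvx⟩ := hex
          have hz : d G (W \ R) v = 0 := by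
            rw [d_zero]
            intro w hw
            rw [Finset.mem_sdiff] at hw
            exact hy v x hx w hw.1 hw.2 hvx
          have hle : d G R v ≤ 2 := by
            have : ∃ p q : V, ∀ x ∈ R, G.Adj v x → x = p ∨ x = q := by
              obtain ⟨p, q, hpq⟩ := five (fun x => G.Adj v x) (x0 := x0) (x1 := x1) (x2 := x2)
                (x3 := x3) (x4 := x4) (fun h h' => htf _ _ _ h h01 h')
                (fun h h' => htf _ _ _ h h12 h') (fun h h' => htf _ _ _ h h23 h')
                (fun h h' => htf _ _ _ h h34 h') (fun h h' => htf _ _ _ h h40 h')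
              refine ⟨p, q, fun x hx => hpq x ?_⟩
              rw [hRe] at hx; simpa using hx
            obtain ⟨p, q, hpq⟩ := this
            refine le_trans (Finset.card_le_card (t := {p, q}) ?_) Finset.card_le_two
            intro x hx
            rw [Finset.mem_filter] at hx
            simpa using hpq x hx.1 hx.2
          rw [d_split G hR v, hz]
          have : d G R v = 1 ∨ d G R v = 2 := by omega
          rcases this with h | h <;> rw [h] <;> decide
      have := dropConst G hmin hR 6 48 hs (by
        intro u hu
        rw [d_sdiff_zero G (hcl u hu)]
        have h9 : b 0 = 0 := rfl
        have := hD u (hR hu)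
        omega)
      have := Finset.card_le_two (a := x0) (b := x2)
      omega

/-- cycle components -/
lemma caseC (G : SimpleGraph V) (hmin : ∀ v, 4 ≤ d G Finset.univ v)
    (htf : ∀ a c e, G.Adj a c → G.Adj c e → G.Adj a e → False)
    {W : Finset V} (ih : ∀ W' ⊂ W, Good G W')
    (hD : ∀ v ∈ W, d G W v ≤ 2) (hK : ∀ v ∉ W, d G W v ≤ 5) (hpos : ∀ v ∈ W, 1 ≤ d G W v)
    (hP : ∀ u ∈ W, ∀ w ∈ W, G.Adj u w → d G W u = 2 → d G W w = 2)
    {x0 : V} (h0 : x0 ∈ W) (d0 : d G W x0 = 2) : Good G W := by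
  have hex : ∃ x ∈ W, G.Adj x0 x := by
    by_contra hcon
    push Not at hcon
    have := (d_zero G).2 hcon
    omega
  obtain ⟨y1, hy1, a01⟩ := hex
  obtain ⟨x1, hx1, b01, nyx, N0⟩ := d_two G d0 hy1 a01
  have dy1 := hP _ h0 _ hy1 a01 d0
  have dx1 := hP _ h0 _ hx1 b01 d0
  obtain ⟨y2, hy2, a12, n0y2, Ny1⟩ := d_two G dy1 h0 a01.symm
  obtain ⟨x2, hx2, b12, n0x2, Nx1⟩ := d_two G dx1 h0 b01.symm
  have dy2 := hP _ hy1 _ hy2 a12 dy1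
  have dx2 := hP _ hx1 _ hx2 b12 dx1
  have e1 := a01.ne
  have e2 := b01.ne
  have e3 := a12.ne
  have e4 := b12.ne
  have e5 : y1 ≠ x2 := by rintro rfl; exact htf _ _ _ b01 b12 a01
  have e6 : x1 ≠ y2 := by rintro rfl; exact htf _ _ _ a01 a12 b01
  by_cases hxy : x2 = y2
  · subst hxy
    obtain ⟨c, hc, hac, _, Nx2⟩ := d_two G dx2 hx1 b12.symm
    have hc' : y1 = c := by
      rcases Nx2 y1 hy1 a12.symm with h | h
      · exact absurd h nyx
      · exact h
    subst hc'
    have hsub : ({x0, x1, y1, x2} : Finset V) ⊆ W := by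
      intro x hx; simp only [Finset.mem_insert, Finset.mem_singleton] at hx
      rcases hx with rfl | rfl | rfl | rfl <;> assumption
    refine step G (W' := W \ {x0, x1, y1, x2}) {x0} (ih _ (sdiff_ssub h0 (by simp)))
      (star_cov G ?_) ?_
    · intro u hu hx
      simp only [Finset.mem_insert, Finset.mem_singleton] at hx
      rcases hx with rfl | rfl | rfl | rfl
      · exact Or.inl rfl
      · exact Or.inr (Or.inl b01)
      · exact Or.inr (Or.inl a01)
      · refine Or.inr (Or.inr ?_)
        intro w hw haw
        rcases Nx2 w hw haw with rfl | rfl <;> assumption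
    · have := dropConst G hmin hsub 0 36 (slope0 G hsub) (by
        intro u hu
        rw [d_sdiff_zero]
        · simp [b]
        · intro w hw ha
          simp only [Finset.mem_insert, Finset.mem_singleton] at hu ⊢
          rcases hu with rfl | rfl | rfl | rfl
          · have := N0 w hw ha; tauto
          · have := Nx1 w hw ha; tauto
          · have := Ny1 w hw ha; tauto
          · have := Nx2 w hw ha; tauto)
      have hcard : ({x0, x1, y1, x2} : Finset V).card = 4 := by
        have := nyx.symm
        simp [*]
      rw [hcard] at this
      simp
      omega
  · obtain ⟨x3, hx3, b23, n13, Nx2⟩ := d_two G dx2 hx1 b12.symm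
    have dx3 := hP _ hx2 _ hx3 b23 dx2
    by_cases h3 : x3 = y2
    · subst h3
      obtain ⟨c, hc, hac, _, Ny2⟩ := d_two G dy2 hx2 b23.symm
      have hc' : y1 = c := by
        rcases Ny2 y1 hy1 a12.symm with h | h
        · exact absurd h e5
        · exact h
      subst hc'
      have hsub : ({x0, x1, x2, x3, y1} : Finset V) ⊆ W := by
        intro x hx; simp only [Finset.mem_insert, Finset.mem_singleton] at hx
        rcases hx with rfl | rfl | rfl | rfl | rfl <;> assumption
      have hcard : ({x0, x1, x2, x3, y1} : Finset V).card = 5 := by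
        have := nyx.symm
        have := e5.symm
        have := e3.symm
        simp [*]
      exact caseC5 G hmin htf ih hD hK hpos rfl hsub hcard N0 Nx1 Nx2 Ny2
        (fun w hw ha => (Ny1 w hw ha).symm) b01 b12 b23 a12.symm a01.symm
    · have dd : d G W x3 = 2 := dx3
      have hw := white_star G hmin h0 3 42 34 (fun R hR => slope3 G hR hK) (by rw [d0]) (by
        intro u hu hau k hk
        have : d G W u = 2 := hP _ h0 _ hu hau d0
        rw [this] at hk ⊢
        have h8 := b_mono (show k ≤ 1 by omega)
        have h9 : b 1 = 8 := rfl
        omega)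
      have hcv := white_star_cov G (W := W) (v := x0)
      have hss := sdiff_ssub h0 (Finset.mem_insert_self x0 (W.filter (fun w => G.Adj x0 w)))
      have hsubR : insert x0 (W.filter (fun w => G.Adj x0 w)) ⊆ W :=
        Finset.insert_subset h0 (Finset.filter_subset _ _)
      have hmemR : ∀ w, w ∈ insert x0 (W.filter (fun w => G.Adj x0 w)) ↔
          (w = x0 ∨ w = y1 ∨ w = x1) := by
        intro w
        rw [Finset.mem_insert, Finset.mem_filter]
        constructor
        · rintro (h | ⟨h, h'⟩)
          · exact Or.inl h
          · exact Or.inr (N0 w h h')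
        · rintro (h | rfl | rfl)
          · exact Or.inl h
          · exact Or.inr ⟨hy1, a01⟩
          · exact Or.inr ⟨hx1, b01⟩
      generalize insert x0 (W.filter (fun w => G.Adj x0 w)) = R at *
      have n3 : x3 ∉ R := by
        rw [hmemR]
        rintro (rfl | rfl | rfl)
        · rcases N0 x2 hx2 b23.symm with h | h
          · exact e5 h.symm
          · exact e4 h.symm
        · rcases Ny1 x2 hx2 b23.symm with h | h
          · exact n0x2 h.symm
          · exact hxy h
        · exact n13 rfl
      have n2 : x2 ∉ R := by
        rw [hmemR]
        rintro (h | h | h)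
        · exact n0x2 h.symm
        · exact e5 h.symm
        · exact e4 h.symm
      have hx1R : x1 ∈ R := (hmemR _).2 (by simp)
      have D2 : d G (W \ R) x2 = 1 := by
        have u1 := d_sdiff_lt G hsubR hx1R b12.symm
        have u2 := d_pos G (Finset.mem_sdiff.2 ⟨hx3, n3⟩) b23
        omega
      have D3 : d G (W \ R) x3 = 2 := by
        rw [d_split G hsubR] at dd
        have : d G R x3 = 0 := by
          rw [d_zero]
          intro w hw ha
          rcases (hmemR w).1 hw with rfl | rfl | rfl
          · exact n3 ((hmemR _).2 (Or.inr (N0 x3 hx3 ha.symm)))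
          · rcases Ny1 x3 hx3 ha.symm with h | h
            · exact n3 ((hmemR _).2 (Or.inl h))
            · exact h3 h
          · rcases Nx1 x3 hx3 ha.symm with h | h
            · exact n3 ((hmemR _).2 (Or.inl h))
            · exact b23.ne h.symm
        omega
      have hdle : ∀ u, d G (W \ R) u ≤ d G W u := d_mono G Finset.sdiff_subset
      obtain ⟨t, W', hW', hcv', hPhi⟩ := caseP G hmin (W := W \ R)
        (fun v hv => (hdle v).trans (hD v (Finset.mem_sdiff.1 hv).1))
        (fun v hv => by
          by_cases h : v ∈ W
          · exact (hdle v).trans ((hD v h).trans (by norm_num))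
          · exact (hdle v).trans (hK v h))
        (Finset.mem_sdiff.2 ⟨hx2, n2⟩) (Finset.mem_sdiff.2 ⟨hx3, n3⟩) b23 D2 D3
      refine step G (W' := W') {x0, t} (ih _ (hW'.trans hss)) ?_ ?_
      · intro u hu w hw ha
        have hl : ∀ x, Cov G {x0} x → Cov G {x0, t} x := by
          intro x hx; simp [Cov] at hx ⊢; tauto
        have hr : ∀ x, Cov G {t} x → Cov G {x0, t} x := by
          intro x hx; simp [Cov] at hx ⊢; tauto
        rcases hcv u hu w hw ha with h | h | ⟨h1, h2⟩
        · exact Or.inl (hl _ h)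
        · exact Or.inr (Or.inl (hl _ h))
        · rcases hcv' u h1 w h2 ha with h | h | h
          · exact Or.inl (hr _ h)
          · exact Or.inr (Or.inl (hr _ h))
          · exact Or.inr (Or.inr h)
      · rw [d0] at hw
        have := Finset.card_le_two (a := x0) (b := t)
        omega

/-- matching components -/
lemma caseM (G : SimpleGraph V) (hmin : ∀ v, 4 ≤ d G Finset.univ v)
    (htf : ∀ a c e, G.Adj a c → G.Adj c e → G.Adj a e → False)
    {W : Finset V} (ih : ∀ W' ⊂ W, Good G W')
    (hD : ∀ v ∈ W, d G W v = 1) {x : V} (hx : x ∈ W) : Good G W := by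
  by_cases hy : ∃ y ∉ W, 2 ≤ d G W y
  · obtain ⟨y, hyW, hy⟩ := hy
    obtain ⟨p, hp, q, hq, hpq⟩ := Finset.one_lt_card.1 (show 1 < d G W y from hy)
    rw [Finset.mem_filter] at hp hq
    obtain ⟨p', hp', app, Np⟩ := d_one G (hD p hp.1)
    obtain ⟨q', hq', aqq, Nq⟩ := d_one G (hD q hq.1)
    obtain ⟨p'', hp'', app', Np'⟩ := d_one G (hD p' hp')
    obtain ⟨q'', hq'', aqq', Nq'⟩ := d_one G (hD q' hq')
    obtain rfl := Np' p hp.1 app.symm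
    obtain rfl := Nq' q hq.1 aqq.symm
    have e1 : p' ≠ q := by rintro rfl; exact htf _ _ _ hp.2 app hq.2
    have e2 : p ≠ q' := by rintro rfl; exact htf _ _ _ hq.2 aqq hp.2
    have e3 : p' ≠ q' := by
      rintro rfl
      exact hpq (Nq' _ hp.1 app.symm)
    have e4 := app.ne
    have e5 := aqq.ne
    have hsub : ({p, p', q, q'} : Finset V) ⊆ W := by
      intro x hx; simp only [Finset.mem_insert, Finset.mem_singleton] at hx
      rcases hx with rfl | rfl | rfl | rfl
      exacts [hp.1, hp', hq.1, hq']
    refine step G (W' := W \ {p, p', q, q'}) {y} (ih _ (sdiff_ssub hp.1 (by simp)))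
      (star_cov G ?_) ?_
    · intro u hu hx
      simp only [Finset.mem_insert, Finset.mem_singleton] at hx
      rcases hx with rfl | rfl | rfl | rfl
      · exact Or.inr (Or.inl hp.2)
      · refine Or.inr (Or.inr fun w hw haw => ?_)
        rw [Np' w hw haw]; exact hp.2
      · exact Or.inr (Or.inl hq.2)
      · refine Or.inr (Or.inr fun w hw haw => ?_)
        rw [Nq' w hw haw]; exact hq.2
    · have := dropConst G hmin hsub 0 36 (slope0 G hsub) (by
        intro u hu
        rw [d_sdiff_zero]
        · simp [b]
        · intro w hw ha
          simp only [Finset.mem_insert, Finset.mem_singleton] at hu ⊢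
          rcases hu with rfl | rfl | rfl | rfl
          · have := Np w hw ha; tauto
          · have := Np' w hw ha; tauto
          · have := Nq w hw ha; tauto
          · have := Nq' w hw ha; tauto)
      have hcard : ({p, p', q, q'} : Finset V).card = 4 := by
        simp [*]
      rw [hcard] at this
      simp
      omega
  · push Not at hy
    have := white_star G hmin hx 8 60 60 (by
      intro R hR v hv
      have := hy v hv
      rw [d_split G hR v] at this ⊢
      have h : (d G (W \ R) v = 0 ∧ d G R v = 0) ∨ (d G (W \ R) v = 0 ∧ d G R v = 1) ∨
        (d G (W \ R) v = 1 ∧ d G R v = 0) := by omega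
      rcases h with ⟨h, h'⟩ | ⟨h, h'⟩ | ⟨h, h'⟩ <;> rw [h, h'] <;> decide) (by rw [hD x hx]) (by
      intro u hu hau k hk
      rw [hD u hu] at hk ⊢
      obtain rfl : k = 0 := by omega
      decide)
    rw [hD x hx] at this
    refine step G {x} (ih _ (sdiff_ssub hx (Finset.mem_insert_self _ _))) (white_star_cov G) ?_
    rw [Finset.card_singleton]
    omega

lemma main (G : SimpleGraph V) (hmin : ∀ v, 4 ≤ d G Finset.univ v)
    (htf : ∀ a c e, G.Adj a c → G.Adj c e → G.Adj a e → False) (W : Finset V) : Good G W := by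
  induction W using Finset.strongInduction with
  | H W ih =>
  by_cases hne : W = ∅
  · subst hne
    exact ⟨∅, by simp, by simp⟩
  obtain ⟨x, hx⟩ := Finset.nonempty_iff_ne_empty.2 hne
  by_cases hpos : ∀ v ∈ W, 1 ≤ d G W v
  swap
  · push Not at hpos
    obtain ⟨v, hv, hv0⟩ := hpos
    have hz : d G W v = 0 := by omega
    rw [d_zero] at hz
    have hsub : ({v} : Finset V) ⊆ W := by simpa using hv
    refine step G (W' := W \ {v}) ∅ (ih _ (sdiff_ssub hv (by simp))) ?_ ?_
    · intro u hu w hw ha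
      refine Or.inr (Or.inr ⟨?_, ?_⟩) <;> rw [Finset.mem_sdiff, Finset.mem_singleton]
      · exact ⟨hu, by rintro rfl; exact hz w hw ha⟩
      · exact ⟨hw, by rintro rfl; exact hz u hu ha.symm⟩
    · have := dropConst G hmin hsub 0 0 (slope0 G hsub) (by
        intro u hu
        rw [Finset.mem_singleton] at hu
        subst hu
        rw [d_sdiff_zero]
        · simp [b]
        · intro w hw ha; exact absurd ha (hz w hw))
      simpa using this
  by_cases h4 : ∃ v ∈ W, 4 ≤ d G W v
  · obtain ⟨v0, hv0, h4⟩ := h4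
    obtain ⟨v, hv, hmax⟩ := Finset.exists_max_image W (d G W) ⟨x, hx⟩
    have h4' := h4.trans (hmax v0 hv0)
    have := white_star G hmin hv 0 36 (36 - b (d G W v - 1)) (fun R hR => slope0 G hR) (by simp) (by
      intro u hu hau k hk
      have := b_mono (show k ≤ d G W v - 1 by have := hmax u hu; omega)
      have : b (d G W v - 1) ≤ 36 := by unfold b; split_ifs <;> omega
      omega)
    refine step G {v} (ih _ (sdiff_ssub hv (Finset.mem_insert_self _ _))) (white_star_cov G) ?_
    have h84 : 84 ≤ d G W v * (36 - b (d G W v - 1)) := by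
      by_cases e4 : d G W v = 4
      · rw [e4]; decide
      by_cases e5 : d G W v = 5
      · rw [e5]; decide
      have h6 : 6 ≤ d G W v := by omega
      have : 15 ≤ 36 - b (d G W v - 1) := by unfold b; split_ifs <;> omega
      calc 84 ≤ 6 * 15 := by norm_num
        _ ≤ _ := Nat.mul_le_mul h6 this
    rw [Finset.card_singleton]
    omega
  push Not at h4
  by_cases h6 : ∃ y ∉ W, 6 ≤ d G W y
  · obtain ⟨y, hy, h6⟩ := h6
    have hsub : W.filter (fun w => G.Adj y w) ⊆ W := Finset.filter_subset _ _
    have := dropConst G hmin hsub 0 21 (slope0 G hsub) (by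
      intro u hu
      have h1 := d_mono G (Finset.sdiff_subset (s := W) (t := W.filter (fun w => G.Adj y w))) u
      have h2 := h4 u (hsub hu)
      have h3 := b_mono (show d G (W \ W.filter (fun w => G.Adj y w)) u ≤ 3 by omega)
      have h9 : b 3 = 15 := rfl
      omega)
    obtain ⟨z, hz⟩ := Finset.card_pos.1 (show 0 < (W.filter (fun w => G.Adj y w)).card by
      unfold d at h6; omega)
    refine step G {y} (ih _ (sdiff_ssub (hsub hz) hz)) (star_cov G ?_) ?_
    · intro u hu h
      exact Or.inr (Or.inl (Finset.mem_filter.1 h).2)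
    · unfold d at h6
      rw [Finset.card_singleton]
      omega
  push Not at h6
  have hK : ∀ v ∉ W, d G W v ≤ 5 := fun v hv => by have := h6 v hv; omega
  by_cases h3 : ∃ v ∈ W, d G W v = 3
  · obtain ⟨v, hv, h3⟩ := h3
    have := white_star G hmin hv 3 39 27 (fun R hR => slope3 G hR hK) (by rw [h3]) (by
      intro u hu hau k hk
      have := h4 u hu
      unfold b
      split_ifs <;> omega)
    rw [h3] at this
    refine step G {v} (ih _ (sdiff_ssub hv (Finset.mem_insert_self _ _))) (white_star_cov G) ?_
    rw [Finset.card_singleton]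
    omega
  push Not at h3
  have hD : ∀ v ∈ W, d G W v ≤ 2 := fun v hv => by
    have := h4 v hv
    have := h3 v hv
    omega
  by_cases hP : ∃ x1 ∈ W, ∃ x2 ∈ W, G.Adj x1 x2 ∧ d G W x1 = 1 ∧ d G W x2 = 2
  · obtain ⟨x1, h1, x2, h2, h12, d1, d2⟩ := hP
    obtain ⟨t, W', hW', hc, hPhi⟩ := caseP G hmin hD hK h1 h2 h12 d1 d2
    refine step G {t} (ih _ hW') hc ?_
    rw [Finset.card_singleton]
    omega
  push Not at hP
  by_cases h2 : ∃ v ∈ W, d G W v = 2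
  · obtain ⟨v, hv, h2⟩ := h2
    refine caseC G hmin htf ih hD hK hpos ?_ hv h2
    intro u hu w hw ha du
    have q1 := hP w hw u hu ha.symm
    have q2 := hD w hw
    have q3 := hpos w hw
    by_contra hcon
    exact q1 (by omega) du
  push Not at h2
  refine caseM G hmin htf ih (fun v hv => ?_) hx
  have q1 := h2 v hv
  have q2 := hD v hv
  have q3 := hpos v hv
  omega

end Iso

/-- If `G` is triangle-free of order `n` with minimum degree at least 4,
then `ι(G) ≤ 3n/10`. -/
theorem isolation_number_triangleFree_minDegree_four {V : Type*} [Fintype V]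
    (G : SimpleGraph V) (n : ℕ) (hn : Fintype.card V = n)
    (htf : G.CliqueFree 3) (hmin : ∀ v : V, 4 ≤ (G.neighborSet v).ncard) :
    (isolationNumber G : ℝ) ≤ 3 * n / 10 := by
  have hm : ∀ v, 4 ≤ Iso.d G Finset.univ v := by
    intro v
    have h := hmin v
    have h2 : G.neighborSet v = ((Finset.univ.filter (fun w => G.Adj v w) : Finset V) : Set V) := by
      ext w; simp
    rw [h2, Set.ncard_coe_finset] at h
    exact h
  have ht : ∀ a c e, G.Adj a c → G.Adj c e → G.Adj a e → False := by
    intro a c e h1 h2 h3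
    exact htf {a, c, e} (SimpleGraph.is3Clique_triple_iff.2 ⟨h1, h3, h2⟩)
  obtain ⟨S, hS, hS2⟩ := Iso.main G hm ht Finset.univ
  have hle : isolationNumber G ≤ S.card := by
    refine Nat.sInf_le ⟨(S : Set V), ?_, Set.ncard_coe_finset S⟩
    intro u v ha
    have := hS u (Finset.mem_univ _) v (Finset.mem_univ _) ha
    simpa [Iso.Cov, closedNbhd] using this
  have hphi : Iso.Phi G Finset.univ = 36 * n := by
    simp [Iso.Phi, hn]
  rw [hphi] at hS2
  have h10 : 10 * isolationNumber G ≤ 3 * n := by omega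
  have h10' : (10 : ℝ) * (isolationNumber G : ℝ) ≤ 3 * n := by exact_mod_cast h10
  linarith
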